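/- arXiv:1705.08539 — 2 statements merged into one kernel-verified Lean document; each statement's English description precedes it below -/
import Mathlib

section
/- Let d ≥ 1 and let 𝓕 be a family of subsets of [n] satisfying the Model 2'_d property: for every x ∈ [n], every D ⊆ [n] with |D| = d and x ∉ D, and every D' ⊆ [n] with |D'| = d and D' ≠ D, there exists F ∈ 𝓕 with x ∈ F such that exactly one of F ∩ D and F ∩ D' is nonempty. Then the dual family {𝓕_a : a ∈ [n]} is d-cover-free. -/
/-- The dual family `{𝓕_a : a ∈ [n]}` of a family `𝓕` of subsets of `[n]`, where
`𝓕_a = {F ∈ 𝓕 : a ∈ F}`. -/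
def dualFam {n : ℕ} (𝓕 : Finset (Finset (Fin n))) : Finset (Finset (Finset (Fin n))) :=
  Finset.univ.image (fun a : Fin n => 𝓕.filter (fun F => a ∈ F))

/-!
Let `x ∉ D` with `|D| = d ≥ 1`, and compare `D` with any `d`-set `D'` containing `x`. Every query
through `x` meets `D'`, so a query through `x` that separates `D` from `D'` has to miss `D`. It lies
in `𝓕_x` but in no `𝓕_a` with `a ∈ D`, so the sets `𝓕_a` with `a ∈ D` do not cover `𝓕_x`.
-/

/-- A family `𝓖` of sets is `d`-cover-free if no member of `𝓖` is contained in the union of `d`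
other members. The `d + 1` members are listed with the covered one last. -/
def IsCoverFree {γ : Type*} (𝓖 : Set (Set γ)) (d : ℕ) : Prop :=
  ∀ G : Fin (d + 1) → Set γ, Function.Injective G → (∀ i, G i ∈ 𝓖) →
    ¬ G (Fin.last d) ⊆ ⋃ i : Fin d, G i.castSucc

theorem IsCoverFree.not_exists_finset_cover {γ : Type*} [DecidableEq γ] {d : ℕ}
    {𝓖 : Finset (Finset γ)} (h𝓖 : IsCoverFree ((↑) '' (𝓖 : Set (Finset γ)) : Set (Set γ)) d) :
    ¬ ∃ G : Fin (d + 1) → Finset γ, Function.Injective G ∧ (∀ i, G i ∈ 𝓖) ∧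
      G (Fin.last d) ⊆ (Finset.univ : Finset (Fin d)).sup (fun i => G i.castSucc) := by
  rintro ⟨G, hG, hmem, hcover⟩
  refine h𝓖 (fun i => (G i : Set γ)) (Finset.coe_injective.comp hG)
    (fun i => Set.mem_image_of_mem _ (hmem i)) fun F hF => ?_
  obtain ⟨i, -, hi⟩ := Finset.mem_sup.mp (hcover hF)
  exact Set.mem_iUnion_of_mem i hi

section Queries

variable {α β : Type*} [Membership α β] {𝓕 : Set β} {d : ℕ}

/-- The subfamily `𝓕_a` of the queries in `𝓕` that contain the element `a`. Queries are members of
an arbitrary type `β` whose terms have elements in `α`, such as `Set α` or `Finset α`. -/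
def queriesThrough (𝓕 : Set β) (a : α) : Set β :=
  {F ∈ 𝓕 | a ∈ F}

/-- The answer to the query `F` is positive when `D` is the set of defectives. -/
def IsPositive (F : β) (D : Finset α) : Prop :=
  ∃ a, a ∈ F ∧ a ∈ D

/-- The Model 2'_d property: every non-defective element can identify the set of `d` defectives
from the answers to the queries containing it. -/
def IsModel2Prime (𝓕 : Set β) (d : ℕ) : Prop :=
  ∀ (x : α) (D : Finset α), D.card = d → x ∉ D →
    ∀ D' : Finset α, D'.card = d → D' ≠ D →
      ∃ F ∈ 𝓕, x ∈ F ∧ Xor (IsPositive F D) (IsPositive F D')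

theorem IsModel2Prime.exists_not_isPositive (h𝓕 : IsModel2Prime 𝓕 d) (hd : 1 ≤ d) {x : α}
    {D : Finset α} (hD : D.card = d) (hx : x ∉ D) :
    ∃ F ∈ 𝓕, x ∈ F ∧ ¬ IsPositive F D := by
  classical
  obtain ⟨D', hxD', -, hD'⟩ : ∃ D', {x} ⊆ D' ∧ D' ⊆ insert x D ∧ D'.card = d :=
    Finset.exists_subsuperset_card_eq (by simp) (by simpa using hd)
      (hD ▸ Finset.card_le_card (Finset.subset_insert x D))
  rw [Finset.singleton_subset_iff] at hxD'
  obtain ⟨F, hF, hxF, hsep⟩ := h𝓕 x D hD hx D' hD' (ne_of_mem_of_not_mem' hxD' hx)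
  have hFD' : IsPositive F D' := ⟨x, hxF, hxD'⟩
  exact ⟨F, hF, hxF, fun hFD => hsep.elim (fun h => h.2 hFD') (fun h => h.2 hFD)⟩

theorem IsModel2Prime.not_queriesThrough_subset (h𝓕 : IsModel2Prime 𝓕 d) (hd : 1 ≤ d) {x : α}
    {D : Finset α} (hD : D.card = d) (hx : x ∉ D) :
    ¬ queriesThrough 𝓕 x ⊆ ⋃ a ∈ D, queriesThrough 𝓕 a := by
  intro hcover
  obtain ⟨F, hF, hxF, hFD⟩ := h𝓕.exists_not_isPositive hd hD hx
  obtain ⟨a, ha, haF⟩ := Set.mem_iUnion₂.mp (hcover ⟨hF, hxF⟩)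
  exact hFD ⟨a, haF.2, ha⟩

theorem model2dprime_implies_dual_coverFree_general (hd : 1 ≤ d) (h𝓕 : IsModel2Prime 𝓕 d) :
    IsCoverFree (Set.range (queriesThrough 𝓕)) d := by
  intro G hG hmem hcover
  choose a ha using hmem
  obtain rfl : queriesThrough 𝓕 ∘ a = G := funext ha
  have ha_inj : Function.Injective a := hG.of_comp
  let D : Finset α := Finset.univ.map ⟨fun i : Fin d => a i.castSucc,
    ha_inj.comp (Fin.castSucc_injective d)⟩
  have hlast : a (Fin.last d) ∉ D := by
    simp [D, ha_inj.eq_iff, Fin.castSucc_ne_last]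
  refine h𝓕.not_queriesThrough_subset hd (D := D) (by simp [D]) hlast ?_
  simpa [D] using hcover

end Queries

theorem coe_image_dualFam {n : ℕ} (𝓕 : Finset (Finset (Fin n))) :
    ((↑) '' (dualFam 𝓕 : Set (Finset (Finset (Fin n)))) : Set (Set (Finset (Fin n)))) =
      Set.range (queriesThrough (𝓕 : Set (Finset (Fin n)))) := by
  ext A
  simp [dualFam, queriesThrough]

theorem isPositive_finset_iff {α : Type*} [DecidableEq α] {F D : Finset α} :
    IsPositive F D ↔ (F ∩ D).Nonempty := by
  simp only [IsPositive, Finset.Nonempty, Finset.mem_inter]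

/-- if `𝓕` satisfies the Model 2'_d property (every non-defective element can
identify the set of `d` defectives), then the dual family is `d`-cover-free. -/
theorem model2dprime_implies_dual_coverFree (n d : ℕ) (hd : 1 ≤ d)
    (𝓕 : Finset (Finset (Fin n)))
    (hmodel : ∀ x : Fin n, ∀ D : Finset (Fin n), D.card = d → x ∉ D →
      ∀ D' : Finset (Fin n), D'.card = d → D' ≠ D →
        ∃ F ∈ 𝓕, x ∈ F ∧
          (((F ∩ D).Nonempty ∧ ¬ (F ∩ D').Nonempty) ∨
            ((F ∩ D').Nonempty ∧ ¬ (F ∩ D).Nonempty))) :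
    ¬ ∃ G : Fin (d + 1) → Finset (Finset (Fin n)),
      Function.Injective G ∧
      (∀ i, G i ∈ dualFam 𝓕) ∧
      G (Fin.last d) ⊆ (Finset.univ : Finset (Fin d)).sup (fun i => G i.castSucc) := by
  simp only [← isPositive_finset_iff] at hmodel
  exact IsCoverFree.not_exists_finset_cover
    (coe_image_dualFam 𝓕 ▸ model2dprime_implies_dual_coverFree_general hd hmodel)
end

section
/- Let d ≥ 1, n ≥ d+1, let 𝓕 be a family of subsets of [n] such that the sets 𝓕_a (a ∈ [n]) are pairwise distinct, let 𝓖 := {𝓕_a : a ∈ [n]} be the dual family, and let 𝓖^d := {G_1 ∪ ⋯ ∪ G_d : G_1,…,G_d pairwise distinct members of 𝓖}. Then 𝓕 satisfies property •1 (for any two distinct X, Y ⊆ [n] with |X| = |Y| = d there exists F ∈ 𝓕 with F ∩ X ≠ ∅ and F ∩ Y = ∅) if and only if 𝓖 is d-union-free and 𝓖^d is Sperner. -/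
/-- `𝓖^d`: the family of all unions of `d` pairwise distinct members of `𝓖`. -/
def dFoldUnions {n : ℕ} (d : ℕ) (𝓖 : Finset (Finset (Finset (Fin n)))) :
    Set (Finset (Finset (Fin n))) :=
  {U | ∃ G : Fin d → Finset (Finset (Fin n)),
    Function.Injective G ∧ (∀ i, G i ∈ 𝓖) ∧ U = Finset.univ.sup G}

/-! A map `φ` into a preorder is injective with an antichain as image precisely when
`φ x ≤ φ y` forces `x = y`. Property •1 is this last condition for the map sending a `d`-set
`X ⊆ [n]` to the union of the `𝓕_a`, `a ∈ X`: a set `F ∈ 𝓕` meeting `X` and disjoint from `Y`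
is a witness that the union for `X` is not contained in the union for `Y`. As `a ↦ 𝓕_a` is
injective, the `d`-sets of points correspond to the `d`-subsets of the dual family, for which
injectivity is `d`-union-freeness and the antichain condition is the Sperner property. -/

open Finset

theorem injOn_and_isAntichain_image_iff {γ β : Type*} [Preorder β] {φ : γ → β} {S : Set γ} :
    Set.InjOn φ S ∧ IsAntichain (· ≤ ·) (φ '' S) ↔
      ∀ x ∈ S, ∀ y ∈ S, φ x ≤ φ y → x = y := by
  constructor
  · rintro ⟨hinj, hanti⟩ x hx y hy hle
    exact hinj hx hy (hanti.eq (Set.mem_image_of_mem φ hx) (Set.mem_image_of_mem φ hy) hle)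
  · intro h
    refine ⟨fun x hx y hy hxy => h x hx y hy hxy.le, ?_⟩
    rintro _ ⟨x, hx, rfl⟩ _ ⟨y, hy, rfl⟩ hne hle
    exact hne (congrArg φ (h x hx y hy hle))

section SubsetsOfCard

variable {α β : Type*}

/-- The `d`-element subsets of `𝓖`: the selections of `d` pairwise distinct members, taken
unordered, whose joins make up `𝓖^d`. -/
def subsetsOfCard (d : ℕ) (𝓖 : Set β) : Set (Finset β) :=
  {s | #s = d ∧ (s : Set β) ⊆ 𝓖}

theorem subsetsOfCard_range (d : ℕ) (f : α ↪ β) :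
    subsetsOfCard d (Set.range f) = Finset.map f '' Set.powersetCard α d := by
  classical
  ext s
  constructor
  · rintro ⟨hcard, hsub⟩
    rw [← Set.image_univ, subset_set_image_iff] at hsub
    obtain ⟨X, -, rfl⟩ := hsub
    rw [← map_eq_image] at hcard ⊢
    exact ⟨X, (card_map f).symm.trans hcard, rfl⟩
  · rintro ⟨X, hX, rfl⟩
    exact ⟨(card_map f).trans hX, by simp only [coe_map, Set.image_subset_range]⟩

theorem image_univ_mem_subsetsOfCard [DecidableEq β] {d : ℕ} {𝓖 : Set β} {G : Fin d → β}
    (hG : Function.Injective G) (hmem : ∀ i, G i ∈ 𝓖) :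
    univ.image G ∈ subsetsOfCard d 𝓖 :=
  ⟨by rw [card_image_of_injective _ hG, card_fin],
    by rwa [coe_image, coe_univ, Set.image_univ, Set.range_subset_iff]⟩

theorem exists_image_univ_eq_of_mem_subsetsOfCard [DecidableEq β] {d : ℕ} {𝓖 : Set β}
    {s : Finset β} (hs : s ∈ subsetsOfCard d 𝓖) :
    ∃ G : Fin d → β, Function.Injective G ∧ (∀ i, G i ∈ 𝓖) ∧ univ.image G = s := by
  obtain ⟨rfl, hsub⟩ := hs
  refine ⟨Subtype.val ∘ s.equivFin.symm,
    Subtype.val_injective.comp s.equivFin.symm.injective,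
    fun i => hsub (s.equivFin.symm i).2, ?_⟩
  rw [← image_image, image_univ_equiv, univ_eq_attach, attach_image_val]

end SubsetsOfCard

section UnionFree

variable {α β : Type*} [SemilatticeSup β] [OrderBot β]

/-- `𝓖` is `d`-union-free: a `d`-subset of `𝓖` is determined by its join. For families of sets
the join is the union. -/
def IsUnionFree (d : ℕ) (𝓖 : Set β) : Prop :=
  Set.InjOn (fun s : Finset β => s.sup id) (subsetsOfCard d 𝓖)

/-- `𝓖^d`: the joins of the `d`-subsets of `𝓖`. -/
def dFoldSups (d : ℕ) (𝓖 : Set β) : Set β :=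
  (fun s : Finset β => s.sup id) '' subsetsOfCard d 𝓖

theorem isUnionFree_iff_forall_fin [DecidableEq β] {d : ℕ} {𝓖 : Set β} :
    IsUnionFree d 𝓖 ↔ ∀ G H : Fin d → β, Function.Injective G → Function.Injective H →
      (∀ i, G i ∈ 𝓖) → (∀ i, H i ∈ 𝓖) → univ.sup G = univ.sup H →
      univ.image G = univ.image H := by
  constructor
  · intro h G H hG hH hGmem hHmem hsup
    refine h (image_univ_mem_subsetsOfCard hG hGmem) (image_univ_mem_subsetsOfCard hH hHmem) ?_
    simpa only [sup_image, Function.id_comp] using hsup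
  · intro h s hs t ht hsup
    obtain ⟨G, hG, hGmem, rfl⟩ := exists_image_univ_eq_of_mem_subsetsOfCard hs
    obtain ⟨H, hH, hHmem, rfl⟩ := exists_image_univ_eq_of_mem_subsetsOfCard ht
    simp only [sup_image, Function.id_comp] at hsup
    exact h G H hG hH hGmem hHmem hsup

theorem mem_dFoldSups_iff_exists_fin {d : ℕ} {𝓖 : Set β} {U : β} :
    U ∈ dFoldSups d 𝓖 ↔
      ∃ G : Fin d → β, Function.Injective G ∧ (∀ i, G i ∈ 𝓖) ∧ U = univ.sup G := by
  classical
  constructor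
  · rintro ⟨s, hs, rfl⟩
    obtain ⟨G, hG, hmem, rfl⟩ := exists_image_univ_eq_of_mem_subsetsOfCard hs
    exact ⟨G, hG, hmem, sup_image ..⟩
  · rintro ⟨G, hG, hmem, rfl⟩
    exact ⟨univ.image G, image_univ_mem_subsetsOfCard hG hmem, sup_image ..⟩

theorem bullet1_iff_unionFree_and_sperner_general {f : α → β} (hf : Function.Injective f)
    (d : ℕ) :
    (∀ X Y : Finset α, #X = d → #Y = d → X ≠ Y → ¬ X.sup f ≤ Y.sup f) ↔
      IsUnionFree d (Set.range f) ∧ IsAntichain (· ≤ ·) (dFoldSups d (Set.range f)) := by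
  lift f to α ↪ β using hf
  rw [IsUnionFree, dFoldSups, injOn_and_isAntichain_image_iff, subsetsOfCard_range]
  simp only [Set.forall_mem_image, Set.powersetCard.mem_iff, sup_map, Function.id_comp, map_inj]
  exact ⟨fun h X hX Y hY => not_imp_not.1 (h X Y hX hY),
    fun h X Y hX hY => mt (h hX hY)⟩

end UnionFree

section Star

variable {α : Type*} [DecidableEq α]

/-- The star `𝓕_a = {F ∈ 𝓕 : a ∈ F}` of the family `𝓕` at the point `a`; the stars at all points
are the members of the dual family. -/
def starAt (𝓕 : Finset (Finset α)) (a : α) : Finset (Finset α) :=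
  𝓕.filter (fun F => a ∈ F)

theorem mem_sup_starAt {𝓕 : Finset (Finset α)} {X F : Finset α} :
    F ∈ X.sup (starAt 𝓕) ↔ F ∈ 𝓕 ∧ (F ∩ X).Nonempty := by
  simp only [mem_sup, starAt, mem_filter, Finset.Nonempty, mem_inter]
  grind

theorem not_sup_starAt_le_iff {𝓕 : Finset (Finset α)} {X Y : Finset α} :
    ¬ X.sup (starAt 𝓕) ≤ Y.sup (starAt 𝓕) ↔ ∃ F ∈ 𝓕, (F ∩ X).Nonempty ∧ F ∩ Y = ∅ := by
  simp only [not_subset, mem_sup_starAt, ← not_nonempty_iff_eq_empty]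
  grind

end Star

theorem coe_dualFam {n : ℕ} (𝓕 : Finset (Finset (Fin n))) :
    (dualFam 𝓕 : Set (Finset (Finset (Fin n)))) = Set.range (starAt 𝓕) := by
  rw [dualFam, coe_image, coe_univ, Set.image_univ]
  rfl

theorem dFoldUnions_eq_dFoldSups {n : ℕ} (d : ℕ) (𝓖 : Finset (Finset (Finset (Fin n)))) :
    dFoldUnions d 𝓖 = dFoldSups d (𝓖 : Set (Finset (Finset (Fin n)))) :=
  Set.ext fun _ => mem_dFoldSups_iff_exists_fin.symm

/-- for `d ≥ 1`, `n ≥ d+1` and `𝓕` with pairwise distinct `𝓕_a`, property •1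
(for any two distinct `d`-sets `X, Y` there is `F ∈ 𝓕` meeting `X` and disjoint from `Y`)
holds iff the dual family `𝓖` is `d`-union-free and `𝓖^d` is Sperner. -/
theorem bullet1_iff_unionFree_and_sperner (n d : ℕ) (hd : 1 ≤ d) (hn : d + 1 ≤ n)
    (𝓕 : Finset (Finset (Fin n)))
    (hdist : ∀ a b : Fin n,
      𝓕.filter (fun F => a ∈ F) = 𝓕.filter (fun F => b ∈ F) → a = b) :
    (∀ X Y : Finset (Fin n), X.card = d → Y.card = d → X ≠ Y →
      ∃ F ∈ 𝓕, (F ∩ X).Nonempty ∧ F ∩ Y = ∅) ↔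
    ((∀ G H : Fin d → Finset (Finset (Fin n)),
        Function.Injective G → Function.Injective H →
        (∀ i, G i ∈ dualFam 𝓕) → (∀ i, H i ∈ dualFam 𝓕) →
        Finset.univ.sup G = Finset.univ.sup H →
        Finset.image G Finset.univ = Finset.image H Finset.univ) ∧
      (∀ A ∈ dFoldUnions d (dualFam 𝓕), ∀ B ∈ dFoldUnions d (dualFam 𝓕),
        A ≠ B → ¬ A ⊆ B)) := by
  have h := bullet1_iff_unionFree_and_sperner_general (f := starAt 𝓕) hdist d
  rw [← coe_dualFam, isUnionFree_iff_forall_fin, ← dFoldUnions_eq_dFoldSups] at h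
  simp only [not_sup_starAt_le_iff] at h
  exact h
end
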